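/- arXiv:2202.10626 — 2 statements merged into one kernel-verified Lean document; each statement's English description precedes it below -/
import Mathlib

section
/- Let G be a group, p a prime, x, y ∈ G, and r a positive integer. Then (xy)^{p^r} ≡ x^{p^r} y^{p^r} [y,x]^{C(p^r,2)} [y,x,x]^{C(p^r,3)} ⋯ [y, x, …, x] (with p^r − 1 copies of x in the last commutator) modulo the normal subgroup K(x,y) of ⟨x,y⟩ generated by all basic commutators in {x, y} of weight at least p^r and of weight at least 2 in y, together with the p^{r−k+1}-th powers of all basic commutators in {x, y} of weight less than p^k and weight at least 2 in y, for 1 ≤ k ≤ r. -/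
/-- The paper's commutator convention: `[x, y] = x⁻¹ * y⁻¹ * x * y`. -/
def cm {G : Type*} [Group G] (x y : G) : G := x⁻¹ * y⁻¹ * x * y

/-- Formal commutator words on a two-letter alphabet `{x, y}`. -/
inductive CommWord : Type
  | x : CommWord
  | y : CommWord
  | comm : CommWord → CommWord → CommWord

namespace CommWord

/-- Total weight. -/
def wt : CommWord → ℕ
  | x => 1
  | y => 1
  | comm a b => wt a + wt b

/-- Weight in the letter `x`. -/
def wtx : CommWord → ℕ
  | x => 1
  | y => 0
  | comm a b => wtx a + wtx b

/-- Weight in the letter `y`. -/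
def wty : CommWord → ℕ
  | x => 0
  | y => 1
  | comm a b => wty a + wty b

/-- An injective encoding, used to fix a linear order on commutator words. -/
def enc : CommWord → ℕ
  | x => 0
  | y => 1
  | comm a b => Nat.pair (enc a) (enc b) + 2

/-- The fixed linear order on commutator words used to define basic commutators:
first by weight, then by the encoding.  (Weight-one words satisfy `x < y`.) -/
def lt (a b : CommWord) : Prop := wt a < wt b ∨ (wt a = wt b ∧ enc a < enc b)

/-- Hall basic commutators on `{x, y}` with respect to the above order: the letters `x, y` are
basic, and `[u, v]` is basic iff `u, v` are basic, `v < u`, and if `u = [u₁, u₂]` then `u₂ ≤ v`. -/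
inductive IsBasic : CommWord → Prop
  | x : IsBasic x
  | y : IsBasic y
  | comm {u v : CommWord} : IsBasic u → IsBasic v → lt v u →
      (∀ u₁ u₂, u = comm u₁ u₂ → ¬ lt v u₂) → IsBasic (comm u v)

/-- Evaluation of a formal commutator word at elements `a, b` of a group,
with `[g, h] = g⁻¹h⁻¹gh`. -/
def eval {H : Type*} [Group H] (a b : H) : CommWord → H
  | x => a
  | y => b
  | comm u v => cm (eval a b u) (eval a b v)

end CommWord

/-- The iterated left-normed commutator `[b, a, a, …, a]` with `k` copies of `a`. -/
def itcomm {H : Type*} [Group H] (b a : H) : ℕ → H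
  | 0 => b
  | k + 1 => cm (itcomm b a k) a

namespace HallPf

structure IsFilt {H : Type*} [Group H] (G : ℕ → ℕ → Subgroup H) : Prop where
  anti : ∀ {i i' s s' : ℕ}, i ≤ i' → s ≤ s' → G i' s' ≤ G i s
  comm : ∀ {i s j t : ℕ} {g h : H}, g ∈ G i s → h ∈ G j t → cm g h ∈ G (i + j) (s + t)

section Basic
variable {H : Type*} [Group H] {G : ℕ → ℕ → Subgroup H}

theorem cm_mul_left (a b c : H) : cm (a * b) c = cm a c * cm (cm a c) b * cm b c := by
  simp only [cm]; group

theorem cm_mul_right (a b c : H) : cm a (b * c) = cm a c * cm a b * cm (cm a b) c := by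
  simp only [cm]; group

theorem cm_inv (a b : H) : (cm a b)⁻¹ = cm b a := by
  simp only [cm]; group

theorem cm_one_left (b : H) : cm 1 b = 1 := by simp [cm]
theorem cm_one_right (b : H) : cm b 1 = 1 := by simp [cm]

theorem IsFilt.comm' (hG : IsFilt G) {i s j t a b : ℕ} {g h : H} (hg : g ∈ G i s) (hh : h ∈ G j t)
    (ha : a ≤ i + j) (hb : b ≤ s + t) : cm g h ∈ G a b :=
  hG.anti ha hb (hG.comm hg hh)

theorem IsFilt.conj (hG : IsFilt G) {i s j t : ℕ} {g h : H} (hg : g ∈ G i s) (hh : h ∈ G j t) :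
    h⁻¹ * g * h ∈ G i s := by
  have : h⁻¹ * g * h = g * cm g h := by simp only [cm]; group
  rw [this]
  exact mul_mem hg (hG.comm' hg hh (by omega) (by omega))

theorem key_mem (hG : IsFilt G) {i s j t w v : ℕ} {g g' h h' : H} (hg : g ∈ G i s)
    (hg' : g' ∈ G (i + w) (s + v)) (hh : h ∈ G j t) (hh' : h' ∈ G (j + w) (t + v)) :
    (cm g h)⁻¹ * cm (g * g') (h * h') ∈ G (i + j + w) (s + t + v) := by
  have e : (cm g h)⁻¹ * cm (g * g') (h * h') =
      cm g h' * cm (cm g h') (cm g h) * cm (cm g h) h' *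
        cm (cm g h' * cm g h * cm (cm g h) h') g' * cm g' (h * h') := by
    simp only [cm]; group
  have hC : cm g h ∈ G (i + j) (s + t) := hG.comm hg hh
  have hD : cm g h' ∈ G (i + j + w) (s + t + v) := hG.comm' hg hh' (by omega) (by omega)
  have hE : cm (cm g h) h' ∈ G (i + j + w) (s + t + v) := hG.comm' hC hh' (by omega) (by omega)
  rw [e]
  refine mul_mem (mul_mem (mul_mem (mul_mem hD ?_) hE) ?_) ?_
  · exact hG.comm' hD hC (by omega) (by omega)
  · refine hG.comm' (i := i + j) (s := s + t) ?_ hg' (by omega) (by omega)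
    exact mul_mem (mul_mem (hG.anti (by omega) (by omega) hD) hC)
      (hG.anti (by omega) (by omega) hE)
  · refine hG.comm' hg' (j := j) (t := t) ?_ (by omega) (by omega)
    exact mul_mem hh (hG.anti (by omega) (by omega) hh')

/-- minimal filtration -/
def minF (gens : ℕ → ℕ → Set H) (i s : ℕ) : Subgroup H :=
  sInf {S | ∃ P : ℕ → ℕ → Subgroup H, IsFilt P ∧ (∀ i s, gens i s ⊆ P i s) ∧ S = P i s}

theorem mem_minF {gens : ℕ → ℕ → Set H} {i s : ℕ} {g : H} :
    g ∈ minF gens i s ↔ ∀ P : ℕ → ℕ → Subgroup H, IsFilt P → (∀ i s, gens i s ⊆ P i s) →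
      g ∈ P i s := by
  simp only [minF, Subgroup.mem_sInf, Set.mem_ofPred_eq]
  constructor
  · intro h P h1 h2
    exact h _ ⟨P, h1, h2, rfl⟩
  · rintro h _ ⟨P, h1, h2, rfl⟩
    exact h P h1 h2

theorem minF_le {gens : ℕ → ℕ → Set H} {P : ℕ → ℕ → Subgroup H} (h1 : IsFilt P)
    (h2 : ∀ i s, gens i s ⊆ P i s) (i s : ℕ) : minF gens i s ≤ P i s :=
  fun _ hg => mem_minF.1 hg P h1 h2

theorem minF_filt (gens : ℕ → ℕ → Set H) : IsFilt (minF gens) where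
  anti := by
    intro i i' s s' hi hs g hg
    rw [mem_minF] at hg ⊢
    intro P h1 h2
    exact h1.anti hi hs (hg P h1 h2)
  comm := by
    intro i s j t g h hg hh
    rw [mem_minF] at hg hh ⊢
    intro P h1 h2
    exact h1.comm (hg P h1 h2) (hh P h1 h2)

theorem gens_sub (gens : ℕ → ℕ → Set H) (i s : ℕ) : gens i s ⊆ minF gens i s := by
  intro g hg
  rw [SetLike.mem_coe, mem_minF]
  intro P _ h2
  exact h2 i s hg

theorem minF_cm {gens : ℕ → ℕ → Set H} {z : H} {w v : ℕ}
    (hz : ∀ i s, ∀ u ∈ gens i s, cm u z ∈ minF gens (i + w) (s + v)) {i s : ℕ} {g : H}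
    (hg : g ∈ minF gens i s) : cm g z ∈ minF gens (i + w) (s + v) := by
  have hF := minF_filt gens
  let P : ℕ → ℕ → Subgroup H := fun i s =>
    { carrier := {g | g ∈ minF gens i s ∧ cm g z ∈ minF gens (i + w) (s + v)}
      one_mem' := ⟨one_mem _, by rw [cm_one_left]; exact one_mem _⟩
      mul_mem' := by
        rintro a b ⟨ha, ha'⟩ ⟨hb, hb'⟩
        refine ⟨mul_mem ha hb, ?_⟩
        rw [cm_mul_left]
        exact mul_mem (mul_mem ha' (hF.comm' ha' hb (by omega) (by omega))) hb'
      inv_mem' := by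
        rintro a ⟨ha, ha'⟩
        refine ⟨inv_mem ha, ?_⟩
        have : cm a⁻¹ z = (a⁻¹)⁻¹ * (cm a z)⁻¹ * a⁻¹ := by simp only [cm]; group
        rw [this]
        exact hF.conj (inv_mem ha') (inv_mem ha) }
  have hP : IsFilt P := by
    constructor
    · rintro i i' s s' hi hs g ⟨h1, h2⟩
      exact ⟨hF.anti hi hs h1, hF.anti (by omega) (by omega) h2⟩
    · rintro i s j t g h ⟨hg, hg'⟩ ⟨hh, hh'⟩
      refine ⟨hF.comm hg hh, ?_⟩
      have e : cm (cm g h) z = (cm g h)⁻¹ * cm (g * cm g z) (h * cm h z) := by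
        simp only [cm]; group
      rw [e]
      exact key_mem hF hg hg' hh hh'
  exact (minF_le hP (fun i s u hu => ⟨gens_sub gens i s hu, hz i s u hu⟩) i s hg).2

end Basic

section Poly
variable {H : Type*} [Group H]

def dl (f : ℕ → H) : ℕ → H := fun n => (f n)⁻¹ * f (n + 1)

def PP (G : ℕ → ℕ → Subgroup H) : ℕ → ℕ → ℕ → Set (ℕ → H)
  | 0, i, s => {f | ∀ n, f n ∈ G i s}
  | k + 1, i, s => {f | (∀ n, f n ∈ G i s) ∧ dl f ∈ PP G k (i + 1) s}

variable {G : ℕ → ℕ → Subgroup H}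

theorem PP_val {k i s : ℕ} {f : ℕ → H} (h : f ∈ PP G k i s) (n : ℕ) : f n ∈ G i s := by
  cases k with
  | zero => exact h n
  | succ k => exact h.1 n

theorem PP_down {k i s : ℕ} {f : ℕ → H} (h : f ∈ PP G (k + 1) i s) : f ∈ PP G k i s := by
  induction k generalizing i f with
  | zero => exact h.1
  | succ k ih => exact ⟨h.1, ih h.2⟩

theorem PP_filt (hG : IsFilt G) (k : ℕ) : ∃ F : ℕ → ℕ → Subgroup (ℕ → H), IsFilt F ∧
    ∀ i s, (F i s : Set (ℕ → H)) = PP G k i s := by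
  induction k with
  | zero =>
    refine ⟨fun i s =>
      { carrier := PP G 0 i s
        one_mem' := fun n => one_mem _
        mul_mem' := fun ha hb n => mul_mem (ha n) (hb n)
        inv_mem' := fun ha n => inv_mem (ha n) }, ⟨?_, ?_⟩, fun i s => rfl⟩
    · intro i i' s s' hi hs f hf n
      exact hG.anti hi hs (hf n)
    · intro i s j t f g hf hg n
      exact hG.comm (hf n) (hg n)
  | succ k ih =>
    obtain ⟨F, hF, hFe⟩ := ih
    have mF : ∀ {i s f}, f ∈ F i s ↔ f ∈ PP G k i s := by
      intro i s f
      rw [← hFe]; rfl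
    refine ⟨fun i s =>
      { carrier := PP G (k + 1) i s
        one_mem' := ⟨fun n => one_mem _, ?_⟩
        mul_mem' := ?_
        inv_mem' := ?_ }, ⟨?_, ?_⟩, fun i s => rfl⟩
    · intro f g hf hg
      refine ⟨fun n => mul_mem (hf.1 n) (hg.1 n), ?_⟩
      have e : dl (f * g) = g⁻¹ * dl f * g * dl g := by
        funext n; simp only [dl, Pi.mul_apply, Pi.inv_apply]; group
      rw [e, ← mF]
      exact mul_mem (hF.conj (mF.2 hf.2) (mF.2 (PP_down hg))) (mF.2 hg.2)
    · have : dl (1 : ℕ → H) = 1 := by funext n; simp [dl]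
      rw [this, ← mF]; exact one_mem _
    · intro f hf
      refine ⟨fun n => inv_mem (hf.1 n), ?_⟩
      have e : dl (f⁻¹) = (f⁻¹)⁻¹ * (dl f)⁻¹ * f⁻¹ := by
        funext n; simp only [dl, Pi.mul_apply, Pi.inv_apply]; group
      rw [e, ← mF]
      exact hF.conj (inv_mem (mF.2 hf.2)) (inv_mem (mF.2 (PP_down hf)))
    · rintro i i' s s' hi hs f ⟨h1, h2⟩
      refine ⟨fun n => hG.anti hi hs (h1 n), ?_⟩
      rw [← mF] at h2 ⊢
      exact hF.anti (by omega) hs h2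
    · intro i s j t f g hf hg
      refine ⟨fun n => hG.comm (hf.1 n) (hg.1 n), ?_⟩
      have e : dl (cm f g) = (cm f g)⁻¹ * cm (f * dl f) (g * dl g) := by
        funext n; simp [dl, cm]
      rw [e, ← mF]
      exact key_mem hF (w := 1) (v := 0) (mF.2 (PP_down hf)) (mF.2 hf.2) (mF.2 (PP_down hg))
        (mF.2 hg.2)

noncomputable def PK (hG : IsFilt G) (k : ℕ) : ℕ → ℕ → Subgroup (ℕ → H) := (PP_filt hG k).choose

theorem PK_filt (hG : IsFilt G) (k : ℕ) : IsFilt (PK hG k) := (PP_filt hG k).choose_spec.1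

theorem mem_PK {hG : IsFilt G} {k i s : ℕ} {f : ℕ → H} : f ∈ PK hG k i s ↔ f ∈ PP G k i s := by
  rw [← SetLike.mem_coe, PK, (PP_filt hG k).choose_spec.2]

/-- all orders -/
noncomputable def PA (hG : IsFilt G) (i s : ℕ) : Subgroup (ℕ → H) := ⨅ k, PK hG k i s

theorem mem_PA {hG : IsFilt G} {i s : ℕ} {f : ℕ → H} : f ∈ PA hG i s ↔ ∀ k, f ∈ PK hG k i s := by
  simp [PA, Subgroup.mem_iInf]

theorem PA_filt (hG : IsFilt G) : IsFilt (PA hG) where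
  anti := by
    intro i i' s s' hi hs f hf
    rw [mem_PA] at hf ⊢
    exact fun k => (PK_filt hG k).anti hi hs (hf k)
  comm := by
    intro i s j t f g hf hg
    rw [mem_PA] at hf hg ⊢
    exact fun k => (PK_filt hG k).comm (hf k) (hg k)

theorem PK_val {hG : IsFilt G} {k i s : ℕ} {f : ℕ → H} (h : f ∈ PK hG k i s) (n : ℕ) :
    f n ∈ G i s := PP_val (mem_PK.1 h) n

theorem PA_val {hG : IsFilt G} {i s : ℕ} {f : ℕ → H} (h : f ∈ PA hG i s) (n : ℕ) :
    f n ∈ G i s := PK_val (mem_PA.1 h 0) n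

theorem PA_dl {hG : IsFilt G} {i s : ℕ} {f : ℕ → H} (h : f ∈ PA hG i s) :
    dl f ∈ PA hG (i + 1) s := by
  rw [mem_PA] at h ⊢
  intro k
  exact mem_PK.2 (mem_PK.1 (h (k + 1))).2

theorem PA_of {hG : IsFilt G} {i s : ℕ} {f : ℕ → H} (h0 : f 0 ∈ G i s)
    (h1 : ∀ n, f n ∈ G i s → dl f n ∈ G i s)
    (h2 : ∀ k, f ∈ PK hG k i s → dl f ∈ PK hG k (i + 1) s) : f ∈ PA hG i s := by
  have hv : ∀ n, f n ∈ G i s := by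
    intro n
    induction n with
    | zero => exact h0
    | succ n ih =>
      have : f (n + 1) = f n * dl f n := by simp [dl]
      rw [this]; exact mul_mem ih (h1 n ih)
  rw [mem_PA]
  intro k
  induction k with
  | zero => exact mem_PK.2 hv
  | succ k ih => exact mem_PK.2 ⟨hv, mem_PK.1 (h2 k ih)⟩

theorem PA_of' {hG : IsFilt G} {i s : ℕ} {f : ℕ → H} (h0 : f 0 ∈ G i s)
    (h2 : dl f ∈ PA hG (i + 1) s) : f ∈ PA hG i s :=
  PA_of h0 (fun n _ => hG.anti (by omega) le_rfl (PA_val h2 n)) (fun k _ => mem_PA.1 h2 k)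

theorem PA_local {hG : IsFilt G} {i s : ℕ} {f : ℕ → H}
    (h : ∀ M, ∃ g ∈ PA hG i s, ∀ n ≤ M, g n = f n) : f ∈ PA hG i s := by
  rw [mem_PA]
  intro k
  induction k generalizing i f with
  | zero =>
    refine mem_PK.2 fun n => ?_
    obtain ⟨g, hg, e⟩ := h n
    rw [← e n le_rfl]; exact PA_val hg n
  | succ k ih =>
    refine mem_PK.2 ⟨fun n => ?_, mem_PK.1 (ih fun M => ?_)⟩
    · obtain ⟨g, hg, e⟩ := h n
      rw [← e n le_rfl]; exact PA_val hg n
    · obtain ⟨g, hg, e⟩ := h (M + 1)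
      exact ⟨dl g, PA_dl hg, fun n hn => by simp only [dl]; rw [e n (by omega), e (n+1) (by omega)]⟩

theorem PA_const (hG : IsFilt G) {i s : ℕ} {g : H} (h : g ∈ G i s) :
    (fun _ => g : ℕ → H) ∈ PA hG i s := by
  refine PA_of' h ?_
  have : dl (fun _ => g : ℕ → H) = 1 := by funext n; simp [dl]
  rw [this]; exact one_mem _

theorem dl_binom (d : H) (j : ℕ) : dl (fun n => d ^ n.choose (j + 1)) = fun n => d ^ n.choose j := by
  funext n
  simp only [dl]
  rw [Nat.choose_succ_succ', add_comm (n.choose j), pow_add, inv_mul_cancel_left]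

theorem PA_binom (hG : IsFilt G) {i j s : ℕ} {d : H} (h : d ∈ G (i + j) s) :
    (fun n => d ^ n.choose j : ℕ → H) ∈ PA hG i s := by
  induction j generalizing i with
  | zero => simpa using PA_const hG h
  | succ j ih =>
    refine PA_of' (by simp) ?_
    rw [dl_binom]
    exact ih (by convert h using 2; omega)

theorem dl_vanish (m : ℕ) (f : ℕ → H) (h : ∀ n < m, f n = 1) (k : ℕ) (hk : k ≤ m) :
    (∀ n < m - k, dl^[k] f n = 1) ∧ dl^[k] f (m - k) = f m := by
  induction k with
  | zero => exact ⟨by simpa using h, by simp⟩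
  | succ k ih =>
    obtain ⟨h1, h2⟩ := ih (by omega)
    have e : m - (k + 1) + 1 = m - k := by omega
    constructor
    · intro n hn
      rw [Function.iterate_succ_apply', dl, h1 n (by omega), h1 (n + 1) (by omega)]; simp
    · rw [Function.iterate_succ_apply', dl, h1 _ (by omega), e, h2]; simp

theorem PA_iter {hG : IsFilt G} {i s : ℕ} {f : ℕ → H} (h : f ∈ PA hG i s) (k : ℕ) :
    dl^[k] f ∈ PA hG (i + k) s := by
  induction k with
  | zero => exact h
  | succ k ih => rw [Function.iterate_succ_apply']; exact PA_dl ih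

theorem taylor {hG : IsFilt G} {s : ℕ} {f : ℕ → H} (h : f ∈ PA hG 0 s) (K : Subgroup H) (N m : ℕ)
    (hv : ∀ n < m, f n = 1)
    (hK : ∀ j, m ≤ j → j ≤ N → ∀ d ∈ G j s, d ^ N.choose j ∈ K) : f N ∈ K := by
  by_cases hm : N < m
  · rw [hv N hm]; exact one_mem _
  · obtain ⟨q, hq⟩ : ∃ q, N + 1 = m + q := ⟨N + 1 - m, by omega⟩
    clear hm
    induction q generalizing m f with
    | zero => rw [hv N (by omega)]; exact one_mem _
    | succ q ih =>
      have hd : f m ∈ G m s := by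
        have := (dl_vanish m f hv m le_rfl).2
        rw [Nat.sub_self] at this
        rw [← this]
        simpa using PA_val (PA_iter h m) 0
      have hb := PA_binom hG (i := 0) (j := m) (s := s) (d := f m) (by simpa using hd)
      have h3 := ih (f := (fun n => (f m) ^ n.choose m)⁻¹ * f) (mul_mem (inv_mem hb) h) (m + 1) ?_
        (fun j hj hj' => hK j (by omega) hj') (by omega)
      · have := mul_mem (hK m le_rfl (by omega) _ hd) h3
        simpa using this
      · intro n hn
        rcases Nat.lt_succ_iff_lt_or_eq.1 hn with h4 | rfl
        · simp [Nat.choose_eq_zero_of_lt h4, hv n h4]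
        · simp
end Poly
section Collect
variable {H : Type*} [Group H] {G : ℕ → ℕ → Subgroup H} (hG : IsFilt G) (x y : H)

/-- congruence -/
def RR (hG : IsFilt G) (i : ℕ) (f g : ℕ → H) : Prop := f⁻¹ * g ∈ PA hG i 2

variable {hG}

theorem RR.refl (i : ℕ) (f : ℕ → H) : RR hG i f f := by simp [RR, one_mem]

theorem RR.symm {i : ℕ} {f g : ℕ → H} (h : RR hG i f g) : RR hG i g f := by
  have := inv_mem h
  simpa [RR] using this

theorem RR.trans {i : ℕ} {f g k : ℕ → H} (h : RR hG i f g) (h' : RR hG i g k) : RR hG i f k := by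
  have := mul_mem h h'
  simpa [RR, mul_assoc] using this

theorem RR.mul {i j t : ℕ} {f g f' g' : ℕ → H} (h : RR hG i f g) (h' : RR hG i f' g')
    (hf : f' ∈ PA hG j t) : RR hG i (f * f') (g * g') := by
  have e : (f * f')⁻¹ * (g * g') = f'⁻¹ * (f⁻¹ * g) * f' * (f'⁻¹ * g') := by group
  rw [RR, e]
  exact mul_mem ((PA_filt hG).conj h hf) h'

theorem RR.swap {i : ℕ} {f g : ℕ → H} (hf : f ∈ PA hG i 1) (hg : g ∈ PA hG 0 1) :
    RR hG i (f * g) (g * f) := by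
  have e : (f * g)⁻¹ * (g * f) = cm g f := by simp only [cm]; group
  rw [RR, e]
  exact (PA_filt hG).comm' hg hf (by omega) (by omega)

theorem RR.mul_one {i : ℕ} {f g : ℕ → H} (hg : g ∈ PA hG i 2) : RR hG i (f * g) f := by
  have e : (f * g)⁻¹ * f = g⁻¹ := by group
  rw [RR, e]; exact inv_mem hg

theorem RR_of_dl {i : ℕ} {f g : ℕ → H} (hf : f ∈ PA hG i 1) (h0 : f 0 = g 0)
    (h : RR hG (i + 1) (dl f) (dl g)) : RR hG i f g := by
  have e : dl (f⁻¹ * g) = cm (f⁻¹ * g) (dl f) * ((dl f)⁻¹ * dl g) := by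
    funext n; simp [dl, cm]; group
  have hf' := PA_dl hf
  refine PA_of ?_ ?_ ?_
  · simp [h0, one_mem]
  · intro n hn
    rw [e]
    exact mul_mem (hG.comm' hn (PA_val hf' n) (by omega) (by omega))
      (hG.anti (by omega) le_rfl (PA_val h n))
  · intro k hk
    rw [e]
    exact mul_mem ((PK_filt hG k).comm' hk (mem_PA.1 hf' k) (by omega) (by omega)) (mem_PA.1 h k)

variable {x y}

theorem cm_binom (hx : x ∈ G 1 0) {i j : ℕ} {c : H} (hc : c ∈ G (i + j) 1) :
    RR hG (i + 1) (cm (fun n => c ^ n.choose j) (fun _ => x)) (fun n => (cm c x) ^ n.choose j) := by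
  have hX : (fun _ => x : ℕ → H) ∈ PA hG 1 0 := PA_const hG hx
  have hF := PA_filt hG
  induction j generalizing i with
  | zero =>
    have : (cm (fun n : ℕ => c ^ n.choose 0) (fun _ => x)) = (fun n : ℕ => (cm c x) ^ n.choose 0) := by
      funext n; simp [cm]
    rw [this]; exact RR.refl _ _
  | succ j ih =>
    have h1 : (fun n => c ^ n.choose (j + 1) : ℕ → H) ∈ PA hG i 1 := PA_binom hG hc
    have hc' : c ∈ G (i + 1 + j) 1 := by convert hc using 2; omega
    have h2 : (fun n => c ^ n.choose j : ℕ → H) ∈ PA hG (i + 1) 1 := PA_binom hG hc'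
    have h3 := hF.comm h1 hX
    refine RR_of_dl h3 (by simp [cm]) ?_
    rw [dl_binom]
    refine RR.trans ?_ (ih hc')
    have e : dl (cm (fun n => c ^ n.choose (j + 1)) (fun _ => x)) =
        cm (cm (fun n => c ^ n.choose (j + 1)) (fun _ => x)) (fun n => c ^ n.choose j) *
          cm (fun n => c ^ n.choose j) (fun _ => x) := by
      have e1 := dl_binom c j
      rw [← e1]
      funext n; simp only [dl, cm, Pi.mul_apply, Pi.inv_apply]; group
    rw [e]
    have h4 := hF.comm h2 hX
    have h5 : cm (cm (fun n => c ^ n.choose (j + 1)) (fun _ => x)) (fun n => c ^ n.choose j)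
        ∈ PA hG (i + 1 + 1) 2 := hF.comm' h3 h2 (by omega) (by omega)
    have := RR.mul (hG := hG) (RR.mul_one (f := 1) h5) (RR.refl _ _) h4
    simpa using this

/-- truncated product -/
def VV (x y : H) : ℕ → ℕ → H
  | 0 => 1
  | M + 1 => VV x y M * fun n => itcomm y x M ^ n.choose (M + 1)

theorem it_mem (hG : IsFilt G) (hx : x ∈ G 1 0) (hy : y ∈ G 1 1) (k : ℕ) : itcomm y x k ∈ G (k + 1) 1 := by
  induction k with
  | zero => exact hy
  | succ k ih => exact hG.comm ih hx

theorem VV_mem (hG : IsFilt G) (hx : x ∈ G 1 0) (hy : y ∈ G 1 1) (M : ℕ) : VV x y M ∈ PA hG 0 1 := by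
  induction M with
  | zero => exact one_mem _
  | succ M ih =>
    exact mul_mem ih (PA_binom hG (by simpa using it_mem hG hx hy M))

theorem VV_stab (x y : H) {M n : ℕ} (h : n ≤ M) : VV x y M n = VV x y n n := by
  induction M, h using Nat.le_induction with
  | base => rfl
  | succ M h ih => simp [VV, ih, Nat.choose_eq_zero_of_lt (Nat.lt_succ_of_le h)]

theorem VV_dl (hG : IsFilt G) (hx : x ∈ G 1 0) (hy : y ∈ G 1 1) (M : ℕ) :
    RR hG 1 (dl (VV x y (M + 1))) (cm (VV x y M) (fun _ => x) * fun _ => y) := by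
  have hX : (fun _ => x : ℕ → H) ∈ PA hG 1 0 := PA_const hG hx
  have hY : (fun _ => y : ℕ → H) ∈ PA hG 1 1 := PA_const hG hy
  have hF := PA_filt hG
  induction M with
  | zero =>
    have : dl (VV x y 1) = (cm (VV x y 0) (fun _ => x) * fun _ => y) := by
      funext n; simp [VV, dl, cm, itcomm, pow_succ]
    rw [this]; exact RR.refl _ _
  | succ M ih =>
    have hV := VV_mem hG hx hy M
    have hV1 := VV_mem hG hx hy (M + 1)
    have hdV1 := PA_dl hV1
    have hb : (fun n => itcomm y x (M + 1) ^ n.choose (M + 1 + 1) : ℕ → H) ∈ PA hG 0 1 :=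
      PA_binom hG (by simpa using it_mem hG hx hy (M + 1))
    have hb' : (fun n => itcomm y x (M + 1) ^ n.choose (M + 1) : ℕ → H) ∈ PA hG 1 1 :=
      PA_binom hG (hG.anti (by omega) le_rfl (it_mem hG hx hy (M + 1)))
    have ha : (fun n => itcomm y x M ^ n.choose (M + 1) : ℕ → H) ∈ PA hG 0 1 :=
      PA_binom hG (by simpa using it_mem hG hx hy M)
    have hc := cm_binom (hG := hG) hx (i := 0) (j := M + 1) (c := itcomm y x M)
      (by simpa using it_mem hG hx hy M)
    have hax := hF.comm ha hX
    have hVx := hF.comm hV hX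
    have e1 : dl (VV x y (M + 1 + 1)) = dl (VV x y (M + 1)) *
        cm (dl (VV x y (M + 1))) (fun n => itcomm y x (M + 1) ^ n.choose (M + 1 + 1)) *
        (fun n => itcomm y x (M + 1) ^ n.choose (M + 1)) := by
      have := dl_binom (itcomm y x (M + 1)) (M + 1)
      rw [← this]
      conv_lhs => rw [VV]
      funext n; simp only [dl, cm, Pi.mul_apply, Pi.inv_apply]; group
    have e2 : cm (VV x y (M + 1)) (fun _ => x) = _ := cm_mul_left _ _ _
    rw [e1, e2]
    have s1 := RR.mul (RR.mul_one (hG := hG) (i := 1) (f := dl (VV x y (M + 1)))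
      (hF.comm' hdV1 hb (by omega) (by omega))) (RR.refl 1 _) hb'
    have s2 := RR.mul ih (RR.refl 1 _) hb'
    have s3 : RR hG 1 ((fun _ => y) * (fun n => itcomm y x (M + 1) ^ n.choose (M + 1)))
        (cm (fun n => itcomm y x M ^ n.choose (M + 1)) (fun _ => x) * fun _ => y) :=
      (RR.swap hY (hF.anti (by omega) le_rfl hb')).trans (RR.mul hc.symm (RR.refl _ _) hY)
    have s4 := RR.mul (RR.refl 1 (cm (VV x y M) (fun _ => x))) s3 (mul_mem hY hb')
    rw [← mul_assoc] at s4
    refine (s1.trans s2).trans (s4.trans ?_)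
    rw [← mul_assoc]
    refine RR.mul (RR.mul ?_ (RR.refl _ _) hax) (RR.refl _ _) hY
    exact (RR.mul_one (hF.comm' hVx ha (by omega) (by omega))).symm

theorem collect (hG : IsFilt G) (hx : x ∈ G 1 0) (hy : y ∈ G 1 1) :
    (fun n => (VV x y n n)⁻¹ * ((x ^ n)⁻¹ * (x * y) ^ n)) ∈ PA hG 0 2 := by
  have hX : (fun _ => x : ℕ → H) ∈ PA hG 1 0 := PA_const hG hx
  have hY : (fun _ => y : ℕ → H) ∈ PA hG 1 1 := PA_const hG hy
  set V : ℕ → H := fun n => VV x y n n with hVd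
  set u : ℕ → H := fun n => (x ^ n)⁻¹ * (x * y) ^ n with hud
  have hV : V ∈ PA hG 0 1 := PA_local fun M => ⟨VV x y M, VV_mem hG hx hy M, fun n hn => VV_stab x y hn⟩
  have hdV : (dl V)⁻¹ * (cm V (fun _ => x) * fun _ => y) ∈ PA hG 1 2 := by
    refine PA_local fun M => ⟨_, VV_dl hG hx hy M, fun n hn => ?_⟩
    simp [dl, cm, hVd, VV_stab x y hn, VV_stab x y (show n ≤ M + 1 by omega),
      VV_stab x y (show n + 1 ≤ M + 1 by omega)]
  set q := (dl V)⁻¹ * (cm V (fun _ => x) * fun _ => y) with hq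
  have hdu : dl u = cm u (fun _ => x) * fun _ => y := by
    funext n; simp only [dl, cm, hud, Pi.mul_apply, Pi.inv_apply, pow_succ]; group
  have hu : ∀ n, u n = V n * (V⁻¹ * u) n := by intro n; simp
  have e : dl (V⁻¹ * u) = cm (V⁻¹ * u) (dl V) * q *
      ((fun _ => y)⁻¹ * (cm (cm V (fun _ => x)) (V⁻¹ * u) * cm (V⁻¹ * u) (fun _ => x)) * fun _ => y) := by
    have e0 : dl (V⁻¹ * u) = cm (V⁻¹ * u) (dl V) * ((dl V)⁻¹ * dl u) := by
      funext n; simp only [dl, cm, Pi.mul_apply, Pi.inv_apply]; group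
    rw [e0, hdu, hq]
    simp only [cm]; group
  change V⁻¹ * u ∈ PA hG 0 2
  refine PA_of ?_ ?_ ?_
  · simp [hVd, hud, VV, one_mem]
  · intro n hn
    rw [e]
    have hVx : cm (V n) x ∈ G 0 1 := hG.comm' (PA_val hV n) hx (by omega) (by omega)
    refine mul_mem (mul_mem (hG.comm' hn (PA_val (PA_dl hV) n) (by omega) (by omega))
      (hG.anti (by omega) le_rfl (PA_val hdV n))) ?_
    exact hG.conj (mul_mem (hG.comm' hVx hn (by omega) (by omega))
      (hG.comm' hn hx (by omega) (by omega))) hy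
  · intro k hk
    rw [e]
    have hF := PK_filt hG k
    refine mul_mem (mul_mem (hF.comm' hk (mem_PA.1 (PA_dl hV) k) (by omega) (by omega))
      (mem_PA.1 hdV k)) ?_
    exact hF.conj (mul_mem (hF.comm' (hF.comm (mem_PA.1 hV k) (mem_PA.1 hX k)) hk (by omega) (by omega))
      (hF.comm' hk (mem_PA.1 hX k) (by omega) (by omega))) (mem_PA.1 hY k)

theorem VV_list (x y : H) (M n : ℕ) : VV x y (M + 1) n =
    y ^ n * ((List.range M).map fun k => itcomm y x (k + 1) ^ n.choose (k + 2)).prod := by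
  induction M with
  | zero => simp [VV, itcomm]
  | succ M ih =>
    rw [VV, Pi.mul_apply, ih, List.range_succ]
    simp [mul_assoc]

end Collect
section Elim
variable {H : Type*} [Group H]

theorem elim {gens : ℕ → ℕ → Set H} {z : H} {w v : ℕ}
    (hz : ∀ i s, ∀ u ∈ gens i s, cm u z ∈ minF gens (i + w) (s + v)) :
    ∃ P : ℕ → ℕ → Subgroup H, IsFilt P ∧ (∀ i s, minF gens i s ≤ P i s) ∧ z ∈ P w v ∧
      ∀ i s, w < i → minF gens i s = ⊥ → P i s = ⊥ := by
  have hF := minF_filt gens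
  have hst : ∀ {i s : ℕ} {g : H} (m : ℕ), g ∈ minF gens i s → (z ^ m)⁻¹ * g * z ^ m ∈ minF gens i s := by
    intro i s g m hg
    induction m with
    | zero => simpa using hg
    | succ m ih =>
      have e : (z ^ (m + 1))⁻¹ * g * z ^ (m + 1) =
        ((z ^ m)⁻¹ * g * z ^ m) * cm ((z ^ m)⁻¹ * g * z ^ m) z := by
        simp only [cm, pow_succ]; group
      rw [e]
      exact mul_mem ih (hF.anti (by omega) (by omega) (minF_cm hz ih))
  have hst' : ∀ {i s : ℕ} {g : H} {m m' : ℕ}, m ≤ m' → (z ^ m)⁻¹ * g * z ^ m ∈ minF gens i s →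
      (z ^ m')⁻¹ * g * z ^ m' ∈ minF gens i s := by
    intro i s g m m' h hg
    obtain ⟨k, rfl⟩ := Nat.exists_eq_add_of_le h
    have := hst k hg
    convert this using 1
    rw [pow_add]; group
  let B : ℕ → ℕ → Subgroup H := fun i s =>
    { carrier := {g | ∃ m : ℕ, (z ^ m)⁻¹ * g * z ^ m ∈ minF gens i s}
      one_mem' := ⟨0, by simp [one_mem]⟩
      mul_mem' := by
        rintro g h ⟨m, hm⟩ ⟨k, hk⟩
        refine ⟨max m k, ?_⟩
        have := mul_mem (hst' (le_max_left m k) hm) (hst' (le_max_right m k) hk)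
        convert this using 1
        group
      inv_mem' := by
        rintro g ⟨m, hm⟩
        refine ⟨m, ?_⟩
        have := inv_mem hm
        convert this using 1
        group }
  have hB : IsFilt B := by
    constructor
    · rintro i i' s s' hi hs g ⟨m, hm⟩
      exact ⟨m, hF.anti hi hs hm⟩
    · rintro i s j t g h ⟨m, hm⟩ ⟨k, hk⟩
      refine ⟨max m k, ?_⟩
      have := hF.comm (hst' (le_max_left m k) hm) (hst' (le_max_right m k) hk)
      convert this using 1
      simp only [cm]; group
  have hBz : ∀ {i s : ℕ} {g : H}, g ∈ B i s → z⁻¹ * g * z ∈ B i s := by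
    rintro i s g ⟨m, hm⟩
    refine ⟨m, ?_⟩
    have := hst 1 hm
    convert this using 1
    simp only [pow_one]
    have := (Commute.refl z).pow_right m
    group
  have hBz' : ∀ {i s : ℕ} {g : H}, g ∈ B i s → z * g * z⁻¹ ∈ B i s := by
    rintro i s g ⟨m, hm⟩
    refine ⟨m + 1, ?_⟩
    convert hm using 1
    rw [pow_succ']; group
  have hBc : ∀ {i s : ℕ} {g : H}, g ∈ B i s → cm g z ∈ B (i + w) (s + v) := by
    rintro i s g ⟨m, hm⟩
    refine ⟨m, ?_⟩
    have := minF_cm hz hm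
    convert this using 1
    simp only [cm]; group
  have hZ : ∀ {i s : ℕ} {g : H} (m : ℤ), g ∈ B i s →
      (z ^ m)⁻¹ * g * z ^ m ∈ B i s ∧ cm g (z ^ m) ∈ B (i + w) (s + v) := by
    intro i s g m hg
    induction m using Int.induction_on with
    | zero => simpa [cm, one_mem] using hg
    | succ m ih =>
      constructor
      · have := hBz ih.1
        convert this using 1
        group
      · have := mul_mem (hBc hg) (hBz ih.2)
        convert this using 1
        simp only [cm]; group
    | pred m ih =>
      constructor
      · have := hBz' ih.1
        convert this using 1
        group
      · have := mul_mem (hBz' (inv_mem (hBc hg))) (hBz' ih.2)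
        convert this using 1
        simp only [cm]; group
  let P : ℕ → ℕ → Subgroup H := fun i s =>
    { carrier := {g | ∃ m : ℤ, (m = 0 ∨ (i ≤ w ∧ s ≤ v)) ∧ z ^ m * g ∈ B i s}
      one_mem' := ⟨0, Or.inl rfl, by simp [one_mem]⟩
      mul_mem' := by
        rintro g h ⟨m, hm, hg⟩ ⟨k, hk, hh⟩
        refine ⟨m + k, by omega, ?_⟩
        have := mul_mem (hZ (-k) hg).1 hh
        convert this using 1
        group
      inv_mem' := by
        rintro g ⟨m, hm, hg⟩
        refine ⟨-m, by omega, ?_⟩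
        have := (hZ m (inv_mem hg)).1
        convert this using 1
        group }
  have hle : ∀ i s, minF gens i s ≤ P i s := fun i s g hg =>
    ⟨0, Or.inl rfl, 0, by simpa using hg⟩
  refine ⟨P, ⟨?_, ?_⟩, hle, ⟨-1, Or.inr ⟨le_rfl, le_rfl⟩, by simp [one_mem]⟩, ?_⟩
  · rintro i i' s s' hi hs g ⟨m, hm, hg⟩
    exact ⟨m, by omega, hB.anti hi hs hg⟩
  · rintro i s j t g h ⟨m, hm, hg⟩ ⟨k, hk, hh⟩
    refine ⟨0, Or.inl rfl, ?_⟩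
    rw [zpow_zero, one_mul]
    obtain ⟨a, rfl⟩ : ∃ a, g = z ^ (-m) * a := ⟨z ^ m * g, by group⟩
    obtain ⟨b, rfl⟩ : ∃ b, h = z ^ (-k) * b := ⟨z ^ k * h, by group⟩
    have ha : a ∈ B i s := by convert hg using 1; group
    have hb : b ∈ B j t := by convert hh using 1; group
    have h1 : cm (z ^ (-m)) (z ^ (-k) * b) ∈ B (i + j) (s + t) := by
      have e : cm (z ^ (-m)) (z ^ (-k) * b) = (cm b (z ^ (-m)))⁻¹ := by
        simp only [cm]; group
      rw [e]
      rcases hm with rfl | hm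
      · simp [cm_one_right, one_mem]
      · exact inv_mem (hB.anti (by omega) (by omega) (hZ (-m) hb).2)
    have h2 : cm a (z ^ (-k)) ∈ B (i + j) (s + t) := by
      rcases hk with rfl | hk
      · simp [cm_one_right, one_mem]
      · exact hB.anti (by omega) (by omega) (hZ (-k) ha).2
    rw [cm_mul_left, cm_mul_right a]
    refine mul_mem (mul_mem h1 (hB.comm' h1 ha (by omega) (by omega)))
      (mul_mem (mul_mem (hB.comm ha hb) h2) (hB.comm' h2 hb (by omega) (by omega)))
  · intro i s hi hbot
    rw [eq_bot_iff]
    rintro g ⟨m, hm, k, hk⟩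
    have hm0 : m = 0 := by omega
    subst hm0
    rw [hbot, Subgroup.mem_bot] at hk
    rw [Subgroup.mem_bot]
    have : g = z ^ k * ((z ^ k)⁻¹ * (z ^ (0 : ℤ) * g) * z ^ k) * (z ^ k)⁻¹ := by simp [mul_assoc]
    rw [this, hk]; simp

end Elim

section Words
open CommWord

theorem wt_pos (u : CommWord) : 1 ≤ u.wt := by
  induction u with
  | x => simp [wt]
  | y => simp [wt]
  | comm a b ha hb => simp only [wt]; omega

theorem enc_inj {u v : CommWord} (h : u.enc = v.enc) : u = v := by
  induction u generalizing v with
  | x => cases v <;> simp_all [enc]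
  | y => cases v <;> simp_all [enc]
  | comm a b ha hb =>
    cases v with
    | x => simp [enc] at h
    | y => simp [enc] at h
    | comm c d =>
      simp only [enc, add_left_inj, Nat.pair_eq_pair] at h
      rw [ha h.1, hb h.2]

theorem enc_bound (n : ℕ) : ∃ B, ∀ u : CommWord, u.wt ≤ n → u.enc ≤ B := by
  induction n with
  | zero => exact ⟨0, fun u hu => by have := wt_pos u; omega⟩
  | succ n ih =>
    obtain ⟨B, hB⟩ := ih
    refine ⟨(B + 1) ^ 2 + 2, fun u hu => ?_⟩
    cases u with
    | x => simp [enc]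
    | y => simp only [enc]; omega
    | comm a b =>
      simp only [wt] at hu
      have h1 := hB a (by have := wt_pos b; omega)
      have h2 := hB b (by have := wt_pos a; omega)
      have h3 := Nat.pair_lt_max_add_one_sq a.enc b.enc
      have h4 : (max a.enc b.enc + 1) ^ 2 ≤ (B + 1) ^ 2 :=
        Nat.pow_le_pow_left (by omega) 2
      simp only [enc]; omega

theorem basic_wty0 {u : CommWord} (h : u.IsBasic) (h0 : u.wty = 0) : u = CommWord.x := by
  induction h with
  | x => rfl
  | y => simp [wty] at h0
  | comm hu hv hlt _ ihu ihv =>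
    simp only [wty] at h0
    rw [ihu (by omega), ihv (by omega)] at hlt
    simp [CommWord.lt] at hlt

theorem not_lt_x (u : CommWord) : ¬ CommWord.lt u CommWord.x := by
  have := wt_pos u
  simp only [CommWord.lt, wt, enc]; omega

theorem basic_wty1 {a b : CommWord} (h : (comm a b).IsBasic) (h0 : (comm a b).wty = 1) :
    b = CommWord.x := by
  cases h with
  | comm hu hv hlt _ =>
    simp only [wty] at h0
    rcases Nat.eq_zero_or_pos a.wty with h1 | h1
    · rw [basic_wty0 hu h1] at hlt
      exact absurd hlt (not_lt_x _)
    · exact basic_wty0 hv (by omega)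

def key (n B : ℕ) (u : CommWord) : ℕ := if n ≤ u.wt then n * (B + 1) else u.wt * (B + 1) + u.enc

theorem key_props (n : ℕ) : ∃ f : CommWord → ℕ, ∃ T : ℕ, (∀ u, f u ≤ T) ∧ (∀ u, f u = T ↔ n ≤ u.wt) ∧
    (∀ u v, f u < f v → CommWord.lt u v) ∧ (∀ u v, CommWord.lt u v → f u ≤ f v) ∧
    (∀ u v, CommWord.lt u v → f u < T → f u < f v) ∧
    (∀ u v, f u < T → f u = f v → u = v) := by
  obtain ⟨B, hB⟩ := enc_bound n
  have aux : ∀ u : CommWord, u.wt < n → key n B u < n * (B + 1) := by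
    intro u hu
    have h1 := hB u (by omega)
    have h2 : (u.wt + 1) * (B + 1) ≤ n * (B + 1) := Nat.mul_le_mul_right _ hu
    rw [key, if_neg (by omega)]
    nlinarith
  have aux2 : ∀ u v : CommWord, u.wt < v.wt → u.wt < n → key n B u < key n B v := by
    intro u v h hu
    by_cases hv : n ≤ v.wt
    · have := aux u hu
      rwa [key.eq_1 n B v, if_pos hv]
    · have h1 := hB u (by omega)
      have h2 : (u.wt + 1) * (B + 1) ≤ v.wt * (B + 1) := Nat.mul_le_mul_right _ h
      rw [key, key, if_neg (by omega), if_neg hv]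
      nlinarith
  have T1 : ∀ u : CommWord, n ≤ u.wt → key n B u = n * (B + 1) := fun u hu => by rw [key, if_pos hu]
  have T2 : ∀ u : CommWord, key n B u ≤ n * (B + 1) := fun u => by
    by_cases h : n ≤ u.wt
    · exact (T1 u h).le
    · exact (aux u (by omega)).le
  have T3 : ∀ u : CommWord, key n B u < n * (B + 1) → u.wt < n := fun u h => by
    by_contra h'
    rw [T1 u (by omega)] at h; omega
  have aux3 : ∀ u v : CommWord, u.wt = v.wt → u.wt < n → key n B u + v.enc = key n B v + u.enc := by
    intro u v h hu
    rw [key, key, if_neg (by omega), if_neg (by omega), h]; omega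
  have M : ∀ u v, CommWord.lt u v → key n B u < n * (B + 1) → key n B u < key n B v := by
    intro u v h hu
    rcases h with h | ⟨h, h'⟩
    · exact aux2 u v h (T3 u hu)
    · have := aux3 u v h (T3 u hu); omega
  refine ⟨key n B, n * (B + 1), T2, fun u => ⟨fun h => ?_, T1 u⟩, fun u v h => ?_, fun u v h => ?_, M,
    fun u v hu h => ?_⟩
  · by_contra h'
    have := aux u (by omega); omega
  · have hu := T3 u (lt_of_lt_of_le h (T2 v))
    rcases lt_trichotomy u.wt v.wt with h1 | h1 | h1
    · exact Or.inl h1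
    · have := aux3 u v h1 hu
      exact Or.inr ⟨h1, by omega⟩
    · have := aux2 v u h1 (by omega); omega
  · rcases (T2 u).lt_or_eq with h1 | h1
    · exact (M u v h h1).le
    · have : n ≤ u.wt := by
        by_contra h'
        have := aux u (by omega); omega
      rw [T1 u this, T1 v (by rcases h with h | h <;> omega)]
  · have h1 := T3 u hu
    have h2 := T3 v (by omega)
    rcases lt_trichotomy u.wt v.wt with h3 | h3 | h3
    · have := aux2 u v h3 h1; omega
    · have := aux3 u v h3 h1
      exact enc_inj (by omega)
    · have := aux2 v u h3 h2; omega

theorem elim_all {H : Type*} [Group H] (a b : H) (n : ℕ) (hn : 2 ≤ n)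
    (hb : ∀ c : CommWord, c.IsBasic → 2 ≤ c.wty → n ≤ c.wt → c.eval a b = 1) :
    ∃ P : ℕ → ℕ → Subgroup H, IsFilt P ∧ a ∈ P 1 0 ∧ b ∈ P 1 1 ∧ ∀ m, n ≤ m → P m 2 = ⊥ := by
  obtain ⟨f, T, hT, hTn, hlt, hle, hlt', hinj⟩ := key_props n
  let L : ℕ → CommWord → Prop := fun t u => u.IsBasic ∧ t ≤ f u ∧
    ∀ u₁ u₂, u = comm u₁ u₂ → f u₂ < t
  have main : ∀ d t, t + d = T → ∃ P : ℕ → ℕ → Subgroup H, IsFilt P ∧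
      (∀ u, L t u → u.eval a b ∈ P u.wt u.wty) ∧ ∀ m, n ≤ m → P m 2 = ⊥ := by
    intro d
    induction d with
    | zero =>
      intro t ht
      obtain rfl : t = T := by omega
      have hbig : ∀ u, L t u → n ≤ u.wt := fun u hu =>
        (hTn u).1 (le_antisymm (hT u) hu.2.1)
      have hwty : ∀ u, L t u → 1 ≤ u.wty := fun u hu => by
        by_contra h
        have h1 := basic_wty0 hu.1 (by omega)
        have := hbig u hu
        rw [h1] at this
        simp [wt] at this; omega
      have hcomm1 : ∀ u v, L t u → L t v → CommWord.lt v u → Commute (u.eval a b) (v.eval a b) := by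
        intro u v hu hv h
        by_cases h2 : 2 ≤ u.wty
        · rw [hb u hu.1 h2 (hbig u hu)]; exact Commute.one_left _
        have hc : (comm u v).IsBasic := by
          refine IsBasic.comm hu.1 hv.1 h ?_
          rintro u₁ u₂ rfl
          have := hwty _ hu
          rw [basic_wty1 hu.1 (by omega)]
          exact not_lt_x v
        have := hb _ hc (by have := hwty u hu; have := hwty v hv; simp only [wty]; omega)
          (by have := hbig u hu; simp only [wt]; omega)
        simp only [CommWord.eval, cm] at this
        rw [mul_assoc, ← mul_inv_rev, inv_mul_eq_one] at this
        exact this.symm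
      have hcomm : ∀ u v, L t u → L t v → Commute (u.eval a b) (v.eval a b) := by
        intro u v hu hv
        rcases lt_trichotomy u.wt v.wt with h1 | h1 | h1
        · exact (hcomm1 v u hv hu (Or.inl h1)).symm
        · rcases lt_trichotomy u.enc v.enc with h2 | h2 | h2
          · exact (hcomm1 v u hv hu (Or.inr ⟨h1, h2⟩)).symm
          · rw [enc_inj h2]
          · exact (hcomm1 u v hu hv (Or.inr ⟨h1.symm, h2⟩))
        · exact (hcomm1 u v hu hv (Or.inl h1))
      let S : Set H := {g | ∃ u, L t u ∧ g = u.eval a b}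
      have hS : ∀ g ∈ Subgroup.closure S, ∀ h ∈ Subgroup.closure S, g * h = h * g := by
        intro g hg h hh
        have hcl := Subgroup.isMulCommutative_closure (k := S) (by
          rintro _ ⟨u, hu, rfl⟩ _ ⟨v, hv, rfl⟩
          exact hcomm u v hu hv)
        have := hcl.is_comm.comm ⟨g, hg⟩ ⟨h, hh⟩
        exact congrArg Subtype.val this
      refine ⟨fun i s => if s ≤ 1 then Subgroup.closure S else ⊥, ⟨?_, ?_⟩, ?_, ?_⟩
      · intro i i' s s' _ hs
        by_cases h : s' ≤ 1
        · rw [if_pos h, if_pos (by omega)]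
        · rw [if_neg h]; exact bot_le
      · intro i s j t' g h hg hh
        have hg' : g ∈ Subgroup.closure S := by
          split_ifs at hg
          · exact hg
          · rw [Subgroup.mem_bot] at hg; rw [hg]; exact one_mem _
        have hh' : h ∈ Subgroup.closure S := by
          split_ifs at hh
          · exact hh
          · rw [Subgroup.mem_bot] at hh; rw [hh]; exact one_mem _
        have : cm g h = 1 := by
          rw [cm, mul_assoc, hS g hg' h hh', ← mul_inv_rev, inv_mul_cancel]
        rw [this]; exact one_mem _
      · intro u hu
        by_cases h : u.wty ≤ 1
        · simp only [if_pos h]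
          exact Subgroup.subset_closure ⟨u, hu, rfl⟩
        · rw [hb u hu.1 (by omega) (hbig u hu)]; exact one_mem _
      · intro m _
        simp
    | succ d ih =>
      intro t ht
      obtain ⟨P, hP, hPg, hPn⟩ := ih (t + 1) (by omega)
      by_cases hex : ∃ z : CommWord, z.IsBasic ∧ f z = t
      · obtain ⟨z, hz, hzt⟩ := hex
        have hzw : z.wt < n := by
          by_contra h
          have := (hTn z).2 (by omega); omega
        let gens : ℕ → ℕ → Set H := fun i s => {g | ∃ u, L (t + 1) u ∧ u.wt = i ∧ u.wty = s ∧ g = u.eval a b}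
        have hmin := minF_le (gens := gens) hP (by
          rintro i s _ ⟨u, hu, rfl, rfl, rfl⟩
          exact hPg u hu)
        obtain ⟨P', h1, h2, h3, h4⟩ := elim (gens := gens) (z := z.eval a b) (w := z.wt) (v := z.wty) (by
          rintro i s _ ⟨u, hu, rfl, rfl, rfl⟩
          refine gens_sub gens _ _ ⟨comm u z, ⟨?_, ?_, ?_⟩, rfl, rfl, rfl⟩
          · refine IsBasic.comm hu.1 hz (hlt _ _ (by have := hu.2.1; omega)) ?_
            intro u₁ u₂ hh hl
            have h5 := hlt' _ _ hl (by omega)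
            have h6 := hu.2.2 u₁ u₂ hh
            omega
          · refine hu.2.1.trans (hle _ _ (Or.inl ?_))
            have := wt_pos z
            simp only [wt]; omega
          · intro u₁ u₂ hh
            cases hh
            omega)
        refine ⟨P', h1, ?_, ?_⟩
        · intro u hu
          by_cases hut : f u = t
          · have : z = u := hinj z u (by omega) (by omega)
            subst this; exact h3
          · refine h2 _ _ (gens_sub gens _ _ ⟨u, ⟨hu.1, by have := hu.2.1; omega, ?_⟩, rfl, rfl, rfl⟩)
            intro u₁ u₂ hh
            have := hu.2.2 u₁ u₂ hh; omega
        · intro m hm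
          refine h4 m 2 (by omega) (eq_bot_iff.2 ?_)
          rw [← hPn m hm]; exact hmin m 2
      · refine ⟨P, hP, ?_, hPn⟩
        intro u hu
        refine hPg u ⟨hu.1, ?_, ?_⟩
        · have h1 : f u ≠ t := fun h => hex ⟨u, hu.1, h⟩
          have := hu.2.1; omega
        · intro u₁ u₂ hh
          have := hu.2.2 u₁ u₂ hh; omega
  obtain ⟨P, hP, hPg, hPn⟩ := main T 0 (by omega)
  refine ⟨P, hP, hPg CommWord.x ⟨IsBasic.x, by omega, ?_⟩, hPg CommWord.y ⟨IsBasic.y, by omega, ?_⟩, hPn⟩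
  · intro _ _ h; cases h
  · intro _ _ h; cases h

theorem eval_hom {H Q : Type*} [Group H] [Group Q] (φ : H →* Q) (a b : H) (c : CommWord) :
    φ (c.eval a b) = c.eval (φ a) (φ b) := by
  induction c with
  | x => rfl
  | y => rfl
  | comm u v hu hv => simp [CommWord.eval, cm, hu, hv]

end Words

section Final
variable {H : Type*} [Group H]

/-- normal closure of the basic commutators -/
def Gam (a b : H) (n : ℕ) : Subgroup H :=
  Subgroup.normalClosure {g | ∃ c : CommWord, c.IsBasic ∧ 2 ≤ c.wty ∧ n ≤ c.wt ∧ g = c.eval a b}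

def gen2 (a b : H) (i s : ℕ) : Set H := {g | (i = 1 ∧ s = 0 ∧ g = a) ∨ (i = 1 ∧ s = 1 ∧ g = b)}

theorem min_le_Gam (a b : H) (n : ℕ) (hn : 2 ≤ n) : minF (gen2 a b) n 2 ≤ Gam a b n := by
  have : (Gam a b n).Normal := Subgroup.normalClosure_normal
  let φ := QuotientGroup.mk' (Gam a b n)
  obtain ⟨P, hP, ha, hb, hPn⟩ := elim_all (φ a) (φ b) n hn (by
    intro c h1 h2 h3
    rw [← eval_hom]
    exact (QuotientGroup.eq_one_iff _).2 (Subgroup.subset_normalClosure ⟨c, h1, h2, h3, rfl⟩))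
  have hQ : IsFilt (fun i s => (P i s).comap φ) := by
    constructor
    · intro i i' s s' hi hs
      exact Subgroup.comap_mono (hP.anti hi hs)
    · intro i s j t g h hg hh
      rw [Subgroup.mem_comap] at hg hh ⊢
      have := hP.comm hg hh
      simpa [cm] using this
  refine (minF_le hQ ?_ n 2).trans ?_
  · rintro i s _ (⟨rfl, rfl, rfl⟩ | ⟨rfl, rfl, rfl⟩)
    · exact ha
    · exact hb
  · intro g hg
    rw [Subgroup.mem_comap, hPn n le_rfl, Subgroup.mem_bot] at hg
    exact (QuotientGroup.eq_one_iff _).1 hg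

theorem choose_div {p s j : ℕ} (hp : p.Prime) (h1 : 1 ≤ j) (hj : j ≤ p ^ s) :
    ∃ v, v ≤ s ∧ p ^ v ≤ j ∧ p ^ (s - v) ∣ (p ^ s).choose j := by
  obtain ⟨v, m, hm, rfl⟩ := Nat.exists_eq_pow_mul_and_not_dvd (n := j) (by omega) p hp.ne_one
  have hv : p ^ v ≤ p ^ v * m := Nat.le_mul_of_pos_right _ (Nat.pos_of_ne_zero (by rintro rfl; simp at hm))
  have hvs : v ≤ s := (Nat.pow_le_pow_iff_right hp.one_lt).1 (hv.trans hj)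
  refine ⟨v, hvs, hv, ?_⟩
  obtain ⟨k, hk⟩ : ∃ k, p ^ v * m = k + 1 := ⟨p ^ v * m - 1, by omega⟩
  obtain ⟨N, hN⟩ : ∃ N, p ^ s = N + 1 := ⟨p ^ s - 1, by have := hp.pos; have := Nat.pow_pos (n := s) this; omega⟩
  have h := Nat.add_one_mul_choose_eq N k
  rw [← hN, ← hk] at h
  have h2 : p ^ s = p ^ v * p ^ (s - v) := by rw [← pow_add]; congr 1; omega
  have h3 : p ^ (s - v) ∣ (p ^ s).choose (p ^ v * m) * m := by
    have : p ^ v * p ^ (s - v) ∣ p ^ v * ((p ^ s).choose (p ^ v * m) * m) := by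
      rw [← h2]
      exact ⟨N.choose k, by rw [h]; ring⟩
    exact Nat.dvd_of_mul_dvd_mul_left (Nat.pow_pos hp.pos) this
  exact (Nat.Coprime.pow_left _ ((Nat.Prime.coprime_iff_not_dvd hp).2 hm)).dvd_of_dvd_mul_right h3

theorem hallpet {G : ℕ → ℕ → Subgroup H} (hG : IsFilt G) (i : ℕ) (K : Subgroup H) [K.Normal] (N : ℕ)
    (hK : ∀ j, 2 ≤ j → j ≤ N → ∀ d ∈ G (i * j) 2, d ^ N.choose j ∈ K)
    {a b : H} (ha : a ∈ G i 2) (hb : b ∈ G i 2) (ha' : a ^ N ∈ K) (hb' : b ^ N ∈ K) :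
    (a * b) ^ N ∈ K := by
  let F : ℕ → ℕ → Subgroup H := fun j _ => G (i * max j 1) 2
  have hF : IsFilt F := by
    constructor
    · intro j j' _ _ hj _
      exact hG.anti (Nat.mul_le_mul_left _ (by omega)) le_rfl
    · intro j _ l _ g h hg hh
      refine hG.comm' hg hh ?_ (by omega)
      rw [← Nat.mul_add]
      exact Nat.mul_le_mul_left _ (by omega)
  have hp : ∀ c ∈ G i 2, (fun n => c ^ n : ℕ → H) ∈ PA hF 0 0 := by
    intro c hc
    have := PA_binom hF (i := 0) (j := 1) (s := 0) (d := c) (by simpa [F] using hc)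
    simpa using this
  have h := mul_mem (inv_mem (mul_mem (hp a ha) (hp b hb))) (hp _ (mul_mem ha hb))
  have h2 := taylor h K N 2 (by
    intro n hn
    interval_cases n <;> simp) (by
    intro j hj hjN d hd
    refine hK j hj hjN d ?_
    have : max j 1 = j := by omega
    simpa [F, this] using hd)
  have := mul_mem (mul_mem ha' hb') h2
  simpa [mul_assoc] using this

theorem eval_mem {G : ℕ → ℕ → Subgroup H} (hG : IsFilt G) {a b : H} (ha : a ∈ G 1 0) (hb : b ∈ G 1 1)
    (c : CommWord) : c.eval a b ∈ G c.wt c.wty := by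
  induction c with
  | x => exact ha
  | y => exact hb
  | comm u v hu hv => exact hG.comm hu hv

end Final
end HallPf

section Collection

variable {G : Type*} [Group G] (p r : ℕ) (x y : G)

/-- The subgroup `⟨x, y⟩`. -/
def genSub : Subgroup G := Subgroup.closure {x, y}

/-- `x` as an element of `⟨x, y⟩`. -/
def X : genSub x y := ⟨x, Subgroup.subset_closure (by simp)⟩

/-- `y` as an element of `⟨x, y⟩`. -/
def Y : genSub x y := ⟨y, Subgroup.subset_closure (by simp)⟩

/-- The generating set of Hall's subgroup `K(x, y)` inside `⟨x, y⟩`: basic commutators in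
`{x, y}` of weight at least `p^r` and weight at least `2` in `y`, together with the
`p^(r-k+1)`-st powers of basic commutators of weight `< p^k` and weight at least `2` in `y`,
for `1 ≤ k ≤ r`. -/
def Kgens : Set (genSub x y) :=
  {g | ∃ c : CommWord, c.IsBasic ∧ 2 ≤ c.wty ∧
    ((p ^ r ≤ c.wt ∧ g = c.eval (X x y) (Y x y)) ∨
     (∃ k, 1 ≤ k ∧ k ≤ r ∧ c.wt < p ^ k ∧ g = (c.eval (X x y) (Y x y)) ^ p ^ (r - k + 1)))}

/-- Hall's subgroup `K(x, y)`, a normal subgroup of `⟨x, y⟩`. -/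
def K : Subgroup (genSub x y) := Subgroup.normalClosure (Kgens p r x y)

theorem hall_X {G : Type*} [Group G] (x y : G) :
    X x y ∈ HallPf.minF (HallPf.gen2 (X x y) (Y x y)) 1 0 :=
  HallPf.gens_sub _ _ _ (Or.inl ⟨rfl, rfl, rfl⟩)

theorem hall_Y {G : Type*} [Group G] (x y : G) :
    Y x y ∈ HallPf.minF (HallPf.gen2 (X x y) (Y x y)) 1 1 :=
  HallPf.gens_sub _ _ _ (Or.inr ⟨rfl, rfl, rfl⟩)

theorem hall_top {G : Type*} [Group G] (x y : G) (w : genSub x y) :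
    w ∈ HallPf.minF (HallPf.gen2 (X x y) (Y x y)) 0 0 := by
  have hF := HallPf.minF_filt (HallPf.gen2 (X x y) (Y x y))
  have h : w ∈ Subgroup.closure (((↑) : Subgroup.closure ({x, y} : Set G) → G) ⁻¹' {x, y}) := by
    rw [Subgroup.closure_closure_coe_preimage]; exact Subgroup.mem_top _
  refine (Subgroup.closure_le _).2 ?_ h
  rintro ⟨g, hg⟩ (h1 | h1)
  · have := hF.anti (Nat.zero_le 1) le_rfl (hall_X x y)
    have e : (⟨g, hg⟩ : genSub x y) = X x y := Subtype.ext h1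
    rw [SetLike.mem_coe, e]; exact this
  · have := hF.anti (Nat.zero_le 1) (Nat.zero_le 1) (hall_Y x y)
    have e : (⟨g, hg⟩ : genSub x y) = Y x y := Subtype.ext h1
    rw [SetLike.mem_coe, e]; exact this

theorem hall_pows {p r : ℕ} (hp : p.Prime) {G : Type*} [Group G] (x y : G) (i s : ℕ) (hi : 2 ≤ i)
    (hsr : s ≤ r) (h : p ^ r ≤ p ^ s * i) :
    ∀ d ∈ HallPf.minF (HallPf.gen2 (X x y) (Y x y)) i 2, d ^ p ^ s ∈ K p r x y := by
  have hKn : (K p r x y).Normal := Subgroup.normalClosure_normal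
  have hF := HallPf.minF_filt (HallPf.gen2 (X x y) (Y x y))
  obtain ⟨q, hq⟩ : ∃ q, q = p ^ r - i := ⟨_, rfl⟩
  induction q using Nat.strong_induction_on generalizing i s with
  | _ q ih =>
  by_cases hbig : p ^ r ≤ i
  · intro d hd
    refine pow_mem ?_ _
    have hd' := HallPf.min_le_Gam _ _ i hi hd
    refine Subgroup.normalClosure_mono (t := Kgens p r x y) ?_ hd'
    rintro g ⟨c, h1, h2, h3, rfl⟩
    exact ⟨c, h1, h2, Or.inl ⟨hbig.trans h3, rfl⟩⟩
  · intro d hd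
    have hgen : ∀ g, g ∈ Group.conjugatesOfSet {g | ∃ c : CommWord, c.IsBasic ∧ 2 ≤ c.wty ∧ i ≤ c.wt ∧
        g = c.eval (X x y) (Y x y)} → g ^ p ^ s ∈ K p r x y := by
      intro g hg
      rw [Group.mem_conjugatesOfSet_iff] at hg
      obtain ⟨_, ⟨c, h1, h2, h3, rfl⟩, hc⟩ := hg
      obtain ⟨w, rfl⟩ := isConj_iff.1 hc
      rw [conj_pow]
      refine hKn.conj_mem _ ?_ _
      by_cases hw : p ^ r ≤ c.wt
      · have h7 : c.eval (X x y) (Y x y) ∈ K p r x y :=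
          Subgroup.subset_normalClosure ⟨c, h1, h2, Or.inl ⟨hw, rfl⟩⟩
        exact pow_mem h7 _
      · have hex : ∃ k, c.wt < p ^ k := ⟨r, by omega⟩
        have hlt := Nat.find_spec hex
        set k := Nat.find hex with hk
        have hkr : k ≤ r := Nat.find_min' hex (by omega)
        have hk1 : r - s < k := by
          by_contra hcon
          have h5 : p ^ k ≤ p ^ (r - s) := Nat.pow_le_pow_right hp.pos (by omega)
          have h6 : p ^ r = p ^ s * p ^ (r - s) := by rw [← pow_add]; congr 1; omega
          rw [h6] at h
          have := Nat.le_of_mul_le_mul_left h (Nat.pow_pos hp.pos)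
          omega
        have h7 : c.eval (X x y) (Y x y) ^ p ^ (r - k + 1) ∈ K p r x y :=
          Subgroup.subset_normalClosure ⟨c, h1, h2, Or.inr ⟨k, by omega, hkr, hlt, rfl⟩⟩
        have h8 : p ^ s = p ^ (r - k + 1) * p ^ (s - (r - k + 1)) := by
          rw [← pow_add]; congr 1; omega
        rw [h8, pow_mul]
        exact pow_mem h7 _
    have hgen2 : ∀ g, g ∈ Group.conjugatesOfSet {g | ∃ c : CommWord, c.IsBasic ∧ 2 ≤ c.wty ∧ i ≤ c.wt ∧
        g = c.eval (X x y) (Y x y)} → g ∈ HallPf.minF (HallPf.gen2 (X x y) (Y x y)) i 2 := by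
      intro g hg
      rw [Group.mem_conjugatesOfSet_iff] at hg
      obtain ⟨_, ⟨c, h1, h2, h3, rfl⟩, hc⟩ := hg
      obtain ⟨w, rfl⟩ := isConj_iff.1 hc
      have h5 := hF.conj (hF.anti h3 h2 (HallPf.eval_mem hF (hall_X x y) (hall_Y x y) c))
        (inv_mem (hall_top x y w))
      simpa using h5
    have hd' := HallPf.min_le_Gam _ _ i hi hd
    have key : d ∈ HallPf.minF (HallPf.gen2 (X x y) (Y x y)) i 2 ∧ d ^ p ^ s ∈ K p r x y := by
      clear hd
      refine Subgroup.closure_induction (p := fun d _ =>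
        d ∈ HallPf.minF (HallPf.gen2 (X x y) (Y x y)) i 2 ∧ d ^ p ^ s ∈ K p r x y)
        (fun g hg => ⟨hgen2 g hg, hgen g hg⟩) ⟨one_mem _, by simp [one_mem]⟩ ?_ ?_ hd'
      · rintro a b _ _ ⟨ha, ha'⟩ ⟨hb, hb'⟩
        refine ⟨mul_mem ha hb, HallPf.hallpet hF i _ _ ?_ ha hb ha' hb'⟩
        intro j hj hjN e he
        obtain ⟨v, hvs, hvj, t, ht⟩ := HallPf.choose_div hp (by omega) hjN
        rw [ht, pow_mul]
        refine pow_mem ?_ _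
        have hij : i * 2 ≤ i * j := Nat.mul_le_mul_left _ hj
        refine ih (p ^ r - i * j) (by omega) (i * j) (s - v) (by omega) (by omega) ?_ rfl e he
        calc p ^ r ≤ p ^ s * i := h
          _ = p ^ (s - v) * (i * p ^ v) := by
            have : p ^ s = p ^ (s - v) * p ^ v := by rw [← pow_add]; congr 1; omega
            rw [this]; ring
          _ ≤ p ^ (s - v) * (i * j) := Nat.mul_le_mul_left _ (Nat.mul_le_mul_left _ hvj)
      · rintro a _ ⟨ha, ha'⟩
        exact ⟨inv_mem ha, by rw [inv_pow]; exact inv_mem ha'⟩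
    exact key.2

/-- **Hall's collection formula.**  For a prime `p` and `r ≥ 1`,
`(xy)^(p^r) ≡ x^(p^r) y^(p^r) [y,x]^C(p^r,2) [y,x,x]^C(p^r,3) ⋯ [y,_(p^r - 1) x]  mod K(x,y)`. -/
theorem hall_collection (hp : p.Prime) (hr : 1 ≤ r) :
    (X x y * Y x y) ^ p ^ r *
      (X x y ^ p ^ r * Y x y ^ p ^ r *
        ((List.range (p ^ r - 1)).map fun k =>
          itcomm (Y x y) (X x y) (k + 1) ^ (p ^ r).choose (k + 2)).prod)⁻¹ ∈
      K p r x y := by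
  have hKn : (K p r x y).Normal := Subgroup.normalClosure_normal
  have hF := HallPf.minF_filt (HallPf.gen2 (X x y) (Y x y))
  have hc := HallPf.collect hF (hall_X x y) (hall_Y x y)
  have h2 := HallPf.taylor hc (K p r x y) (p ^ r) 2 (by
    intro n hn
    interval_cases n <;> simp [HallPf.VV, itcomm]) (by
    intro j hj hjN d hd
    obtain ⟨v, hvs, hvj, t, ht⟩ := HallPf.choose_div hp (by omega) hjN
    rw [ht, pow_mul]
    refine pow_mem (hall_pows hp x y j (r - v) hj (by omega) ?_ d hd) _
    calc p ^ r = p ^ (r - v) * p ^ v := by rw [← pow_add]; congr 1; omega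
      _ ≤ p ^ (r - v) * j := Nat.mul_le_mul_left _ hvj)
  have hpos : 0 < p ^ r := Nat.pow_pos hp.pos
  have h3 := HallPf.VV_list (X x y) (Y x y) (p ^ r - 1) (p ^ r)
  rw [Nat.sub_add_cancel hpos] at h3
  rw [mul_assoc, ← h3]
  have h4 := hKn.conj_mem _ h2 (X x y ^ p ^ r * HallPf.VV (X x y) (Y x y) (p ^ r) (p ^ r))
  convert h4 using 1
  group

end Collection
end

section
/- Let G be a group. The map sending a generator a ⊗ b of the nonabelian tensor square G ⊗ G to the commutator [a, b^φ] in ν(G) extends to a group isomorphism from G ⊗ G onto the subgroup [G, G^φ] = ⟨[a, b^φ] : a, b ∈ G⟩ of ν(G). -/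
/-- Conjugation convention: `x ^ y = y⁻¹ * x * y`. -/
def cj {G : Type*} [Group G] (x y : G) : G := y⁻¹ * x * y

namespace Rocco

variable (G : Type*) [Group G]

/-- The defining relators of Rocco's group `ν(G)`, inside the free product `G ∗ G`
(the second factor playing the role of the isomorphic copy `G^φ`). -/
def rels : Set (Monoid.Coprod G G) :=
  {x | ∃ g₁ g₂ g₃ : G,
    x = cj (cm (Monoid.Coprod.inl g₁) (Monoid.Coprod.inr g₂)) (Monoid.Coprod.inl g₃) *
        (cm (Monoid.Coprod.inl (cj g₁ g₃)) (Monoid.Coprod.inr (cj g₂ g₃)))⁻¹ ∨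
    x = cj (cm (Monoid.Coprod.inl g₁) (Monoid.Coprod.inr g₂)) (Monoid.Coprod.inl g₃) *
        (cj (cm (Monoid.Coprod.inl g₁) (Monoid.Coprod.inr g₂)) (Monoid.Coprod.inr g₃))⁻¹}

/-- Rocco's construction `ν(G)`. -/
abbrev nu := Monoid.Coprod G G ⧸ Subgroup.normalClosure (rels G)

/-- The canonical image of `G` in `ν(G)`. -/
def ν₁ : G →* nu G := (QuotientGroup.mk' (Subgroup.normalClosure (rels G))).comp Monoid.Coprod.inl

/-- The canonical image of the copy `G^φ` in `ν(G)`; `ν₂ g` plays the role of `g^φ`. -/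
def ν₂ : G →* nu G := (QuotientGroup.mk' (Subgroup.normalClosure (rels G))).comp Monoid.Coprod.inr

end Rocco

/-- The defining relators of the nonabelian tensor square `G ⊗ G`, inside the free group on
the symbols `g ⊗ h` (pairs `(g, h)`): `(g₁g₂) ⊗ h = (g₁^{g₂} ⊗ h^{g₂})(g₂ ⊗ h)` and
`g ⊗ (h₁h₂) = (g ⊗ h₂)(g^{h₂} ⊗ h₁^{h₂})`. -/
def tensorRels (G : Type*) [Group G] : Set (FreeGroup (G × G)) :=
  {x | (∃ g₁ g₂ h : G,
        x = FreeGroup.of (g₁ * g₂, h) *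
            (FreeGroup.of (cj g₁ g₂, cj h g₂) * FreeGroup.of (g₂, h))⁻¹) ∨
      (∃ g h₁ h₂ : G,
        x = FreeGroup.of (g, h₁ * h₂) *
            (FreeGroup.of (g, h₂) * FreeGroup.of (cj g h₂, cj h₁ h₂))⁻¹)}

/-- The nonabelian tensor square `G ⊗ G`. -/
abbrev TensorSquare (G : Type*) [Group G] :=
  FreeGroup (G × G) ⧸ Subgroup.normalClosure (tensorRels G)

/-- The generator `g ⊗ h` of `G ⊗ G`. -/
def tmk {G : Type*} [Group G] (g h : G) : TensorSquare G :=
  QuotientGroup.mk (FreeGroup.of (g, h))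

namespace TS

variable {G : Type*} [Group G]

theorem rel1 (a b h : G) : tmk (a * b) h = tmk (cj a b) (cj h b) * tmk b h := by
  have : (QuotientGroup.mk' (Subgroup.normalClosure (tensorRels G)))
      (FreeGroup.of (a * b, h) * (FreeGroup.of (cj a b, cj h b) * FreeGroup.of (b, h))⁻¹) = 1 :=
    (QuotientGroup.eq_one_iff _).2 (Subgroup.subset_normalClosure (Or.inl ⟨a, b, h, rfl⟩))
  rw [map_mul, map_inv, mul_inv_eq_one, map_mul] at this
  exact this

theorem rel2 (g a b : G) : tmk g (a * b) = tmk g b * tmk (cj g b) (cj a b) := by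
  have : (QuotientGroup.mk' (Subgroup.normalClosure (tensorRels G)))
      (FreeGroup.of (g, a * b) * (FreeGroup.of (g, b) * FreeGroup.of (cj g b, cj a b))⁻¹) = 1 :=
    (QuotientGroup.eq_one_iff _).2 (Subgroup.subset_normalClosure (Or.inr ⟨g, a, b, rfl⟩))
  rw [map_mul, map_inv, mul_inv_eq_one, map_mul] at this
  exact this

/-- universal property -/
def tlift {H : Type*} [Group H] (f : G → G → H)
    (h1 : ∀ a b h, f (a * b) h = f (cj a b) (cj h b) * f b h)
    (h2 : ∀ g a b, f g (a * b) = f g b * f (cj g b) (cj a b)) : TensorSquare G →* H :=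
  QuotientGroup.lift _ (FreeGroup.lift (fun p : G × G => f p.1 p.2)) (by
    have : Subgroup.normalClosure (tensorRels G) ≤
        (FreeGroup.lift (fun p : G × G => f p.1 p.2)).ker := by
      apply Subgroup.normalClosure_le_normal
      rintro x (⟨a, b, h, rfl⟩ | ⟨g, a, b, rfl⟩)
      · simp [MonoidHom.mem_ker, h1 a b h]
      · simp [MonoidHom.mem_ker, h2 g a b]
    exact this)

theorem tlift_tmk {H : Type*} [Group H] (f : G → G → H) (h1) (h2) (a b : G) :
    tlift f h1 h2 (tmk a b) = f a b := by
  unfold tlift tmk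
  erw [QuotientGroup.lift_mk]
  simp

theorem text {H : Type*} [Group H] {f g : TensorSquare G →* H}
    (h : ∀ a b, f (tmk a b) = g (tmk a b)) : f = g := by
  apply QuotientGroup.monoidHom_ext
  apply FreeGroup.ext_hom
  rintro ⟨a, b⟩
  exact h a b

theorem cj_mul (a b x : G) : cj (a * b) x = cj a x * cj b x := by simp [cj, mul_assoc]
theorem cj_cj (a x y : G) : cj (cj a x) y = cj a (x * y) := by simp [cj, mul_assoc]
theorem cj_one (a : G) : cj a 1 = a := by simp [cj]
theorem mul_cj (x y : G) : x * cj y x = y * x := by simp [cj, mul_assoc]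

/-- right action of x -/
def ract (x : G) : TensorSquare G →* TensorSquare G :=
  tlift (fun a b => tmk (cj a x) (cj b x))
    (by
      intro a b h
      simp only [cj_mul, rel1, cj_cj, mul_cj])
    (by
      intro a b h
      simp only [cj_mul, rel2, cj_cj, mul_cj])

theorem ract_tmk (x a b : G) : ract x (tmk a b) = tmk (cj a x) (cj b x) := tlift_tmk ..

theorem ract_ract (x y : G) (t : TensorSquare G) : ract y (ract x t) = ract (x * y) t := by
  have : (ract y).comp (ract x) = ract (x * y) := text fun a b => by
    simp [ract_tmk, cj_cj]
  exact DFunLike.congr_fun this t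

theorem ract_one (t : TensorSquare G) : ract 1 t = t := by
  have : ract (1 : G) = MonoidHom.id _ := text fun a b => by
    simp [ract_tmk, cj_one]
  exact DFunLike.congr_fun this t

theorem bl0 (a b g h : G) :
    ract (h * g) (tmk a b) * tmk g h = tmk g h * ract (g * h) (tmk a b) := by
  have e1 : tmk (a * g) (b * h) = ract g (tmk a h) * ract (h * g) (tmk a b) *
      (tmk g h * ract h (tmk g b)) := by
    rw [rel1, cj_mul, rel2, rel2 g b h]
    simp only [ract_tmk, cj_cj, mul_cj]
  have e2 : tmk (a * g) (b * h) = ract g (tmk a h) * tmk g h *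
      (ract (g * h) (tmk a b) * ract h (tmk g b)) := by
    rw [rel2, rel1, cj_mul, rel1 (cj a h)]
    simp only [ract_tmk, cj_cj, mul_cj]
  rw [e1] at e2
  exact mul_left_cancel (a := ract g (tmk a h)) (mul_right_cancel (b := ract h (tmk g b)) (by simpa only [mul_assoc] using e2))

theorem bl (t : TensorSquare G) (g h : G) :
    ract (h * g) t * tmk g h = tmk g h * ract (g * h) t := by
  have : ract (h * g) = (MulAut.conj (tmk g h)).toMonoidHom.comp (ract (g * h)) :=
    text fun a b => by
      have := bl0 a b g h
      simp [← this]
  rw [this]; simp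

/-- left action -/
def lact : G →* MulAut (TensorSquare G) where
  toFun x := MonoidHom.toMulEquiv (ract x⁻¹) (ract x)
    (by refine MonoidHom.ext fun t => ?_; simp [ract_ract, ract_one]) (by refine MonoidHom.ext fun t => ?_; simp [ract_ract, ract_one])
  map_one' := by ext t; simp [ract_one]
  map_mul' x y := by ext t; simp [ract_ract]

theorem lact_apply (x : G) (t : TensorSquare G) : lact x t = ract x⁻¹ t := rfl

abbrev L (G : Type*) [Group G] := TensorSquare G ⋊[lact] G

open SemidirectProduct

theorem inl_inr (t : TensorSquare G) (g : G) :
    (inl t * inr g : L G) = inr g * inl (ract g t) := by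
  ext <;> simp [lact_apply, ract_ract, ract_one]

theorem tmk_one_right (g : G) : tmk g (1 : G) = 1 := by
  have := rel2 g 1 1
  simpa [cj_one] using this

theorem tmk_one_left (g : G) : tmk (1 : G) g = 1 := by
  have := rel1 1 1 g
  simpa [cj_one] using this

def alpha2 (h : G) : G →* L G where
  toFun g := inr g * inl (tmk g h)
  map_one' := by simp [tmk_one_left]
  map_mul' a b := by
    rw [rel1, ← ract_tmk, mul_assoc (inr a), ← mul_assoc (inl _), inl_inr]
    simp only [map_mul, mul_assoc]

def alpha (h : G) : L G →* L G :=
  SemidirectProduct.lift (inl.comp (ract h)) (alpha2 h) (by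
    intro g
    refine MonoidHom.ext fun t => ?_
    have key := bl (ract g⁻¹ t) g h
    simp only [ract_ract, inv_mul_cancel_left] at key
    have k2 : (inl (ract h (lact g t)) : L G) * alpha2 h g = alpha2 h g * inl (ract h t) := by
      change inl (ract h (ract g⁻¹ t)) * (inr g * inl (tmk g h)) =
        (inr g * inl (tmk g h)) * inl (ract h t)
      rw [← mul_assoc, inl_inr, mul_assoc, mul_assoc, ← map_mul, ← map_mul, ← key]
      simp only [ract_ract, mul_assoc]
    change inl (ract h (lact g t)) = alpha2 h g * inl (ract h t) * (alpha2 h g)⁻¹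
    rw [← k2, mul_inv_cancel_right])

theorem alpha_inl (h : G) (t : TensorSquare G) : alpha h (inl t) = inl (ract h t) := by
  simp [alpha]
theorem alpha_inr (h g : G) : alpha h (inr g) = inr g * inl (tmk g h) := by
  simp [alpha, alpha2]

theorem alpha_alpha (a b : G) (x : L G) : alpha b (alpha a x) = alpha (a * b) x := by
  have : (alpha b).comp (alpha a) = alpha (a * b) := by
    apply SemidirectProduct.hom_ext
    · refine MonoidHom.ext fun t => ?_; simp [alpha_inl, ract_ract]
    · ext1 g
      simp only [MonoidHom.comp_apply, alpha_inr, map_mul, alpha_inl, ract_tmk, rel2, mul_assoc]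
  exact DFunLike.congr_fun this x

theorem alpha_one (x : L G) : alpha 1 x = x := by
  have : alpha (1 : G) = MonoidHom.id _ := by
    apply SemidirectProduct.hom_ext
    · refine MonoidHom.ext fun t => ?_; simp [alpha_inl, ract_one]
    · ext1 g
      simp [alpha_inr, tmk_one_right]
  exact DFunLike.congr_fun this x

def psi : G →* MulAut (L G) where
  toFun x := MonoidHom.toMulEquiv (alpha x⁻¹) (alpha x)
    (by apply MonoidHom.ext; intro t; simp [alpha_alpha, alpha_one])
    (by apply MonoidHom.ext; intro t; simp [alpha_alpha, alpha_one])
  map_one' := by apply MulEquiv.ext; intro t; simp [alpha_one]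
  map_mul' x y := by apply MulEquiv.ext; intro t; simp [alpha_alpha]

theorem psi_apply (x : G) (t : L G) : psi x t = alpha x⁻¹ t := rfl

abbrev N (G : Type*) [Group G] := L G ⋊[psi] G

theorem cj_inr_N (x : L G) (h : G) : cj (inl x : N G) (inr h) = inl (alpha h x) := by
  rw [cj, ← map_inv, ← inl_aut_inv, ← map_inv, psi_apply, inv_inv]

theorem cj_inr_L (t : TensorSquare G) (g : G) : cj (inl t : L G) (inr g) = inl (ract g t) := by
  rw [cj, ← map_inv, ← inl_aut_inv, ← map_inv, lact_apply, inv_inv]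

theorem map_cj {A B : Type*} [Group A] [Group B] (f : A →* B) (x y : A) :
    f (cj x y) = cj (f x) (f y) := by simp [cj]
theorem map_cm {A B : Type*} [Group A] [Group B] (f : A →* B) (x y : A) :
    f (cm x y) = cm (f x) (f y) := by simp [cm]
theorem cm_eq {A : Type*} [Group A] (x y : A) : cm x y = x⁻¹ * cj x y := by
  simp [cm, cj, mul_assoc]

theorem cm_N (g h : G) : cm (inl (inr g) : N G) (inr h) = inl (inl (tmk g h)) := by
  rw [cm_eq, cj_inr_N, alpha_inr, ← map_inv, ← map_mul, inv_mul_cancel_left]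

def toN0 (G : Type*) [Group G] : Monoid.Coprod G G →* N G :=
  Monoid.Coprod.lift (inl.comp inr) inr

theorem toN0_cm (g h : G) : toN0 G (cm (Monoid.Coprod.inl g) (Monoid.Coprod.inr h)) =
    inl (inl (tmk g h)) := by
  rw [map_cm, ← cm_N]; simp [toN0]

open Rocco

def toN (G : Type*) [Group G] : nu G →* N G :=
  QuotientGroup.lift _ (toN0 G) (by
    have : Subgroup.normalClosure (rels G) ≤ (toN0 G).ker := by
      apply Subgroup.normalClosure_le_normal
      have hl : ∀ g, toN0 G (Monoid.Coprod.inl g) = inl (inr g) := fun g => by simp [toN0]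
      have hr : ∀ g, toN0 G (Monoid.Coprod.inr g) = inr g := fun g => by simp [toN0]
      rintro x ⟨a, b, c, rfl | rfl⟩
      · rw [SetLike.mem_coe, MonoidHom.mem_ker, map_mul, map_inv, mul_inv_eq_one, map_cj,
          toN0_cm, toN0_cm, hl, ← map_cj, cj_inr_L, ract_tmk]
      · rw [SetLike.mem_coe, MonoidHom.mem_ker, map_mul, map_inv, mul_inv_eq_one, map_cj, map_cj,
          toN0_cm, hl, hr, ← map_cj, cj_inr_L, cj_inr_N, alpha_inl]
    exact this)

theorem toN_cm (g h : G) : toN G (cm (ν₁ G g) (ν₂ G h)) = inl (inl (tmk g h)) := by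
  rw [← toN0_cm]
  rw [ν₁, ν₂, MonoidHom.comp_apply, MonoidHom.comp_apply, ← map_cm]
  rfl

theorem nu_rel (a b c : G) : cj (cm (ν₁ G a) (ν₂ G b)) (ν₁ G c) =
    cm (ν₁ G (cj a c)) (ν₂ G (cj b c)) := by
  have := (QuotientGroup.eq_one_iff (N := Subgroup.normalClosure (rels G)) _).2
    (Subgroup.subset_normalClosure ⟨a, b, c, Or.inl rfl⟩)
  change QuotientGroup.mk' _ _ = _ at this
  rw [map_mul, map_inv, mul_inv_eq_one, map_cj, map_cm, map_cm] at this
  exact this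

theorem nu_rel2 (a b c : G) : cj (cm (ν₁ G a) (ν₂ G b)) (ν₂ G c) =
    cm (ν₁ G (cj a c)) (ν₂ G (cj b c)) := by
  have := (QuotientGroup.eq_one_iff (N := Subgroup.normalClosure (rels G)) _).2
    (Subgroup.subset_normalClosure ⟨a, b, c, Or.inr rfl⟩)
  change QuotientGroup.mk' _ _ = _ at this
  rw [map_mul, map_inv, mul_inv_eq_one, map_cj, map_cj, map_cm] at this
  rw [← nu_rel]
  exact this.symm

def F (G : Type*) [Group G] : TensorSquare G →* nu G :=
  tlift (fun a b => cm (ν₁ G a) (ν₂ G b))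
    (by intro a b h; rw [← nu_rel, map_mul]; simp only [cm, cj]; group)
    (by intro a b h; rw [← nu_rel2, map_mul]; simp only [cm, cj]; group)

theorem F_tmk (a b : G) : F G (tmk a b) = cm (ν₁ G a) (ν₂ G b) := tlift_tmk ..

theorem closure_tmk : Subgroup.closure {x : TensorSquare G | ∃ a b, x = tmk a b} = ⊤ := by
  rw [eq_top_iff]
  rintro x -
  obtain ⟨y, rfl⟩ := QuotientGroup.mk_surjective x
  induction y using FreeGroup.induction_on with
  | C1 => exact one_mem _
  | of p => exact Subgroup.subset_closure ⟨p.1, p.2, rfl⟩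
  | inv_of p h => exact inv_mem h
  | mul x y hx hy => exact mul_mem hx hy

end TS

open Rocco in
/-- The map `a ⊗ b ↦ [a, b^φ]` extends to an isomorphism from `G ⊗ G` onto the subgroup
`[G, G^φ] = ⟨[a, b^φ] : a, b ∈ G⟩` of `ν(G)`. -/
theorem tensorSquare_iso_comm_subgroup (G : Type*) [Group G] :
    ∃ f : TensorSquare G →* nu G,
      Function.Injective f ∧
      f.range = Subgroup.closure {x : nu G | ∃ a b : G, x = cm (ν₁ G a) (ν₂ G b)} ∧
      ∀ g h : G, f (tmk g h) = cm (ν₁ G g) (ν₂ G h) := by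
  refine ⟨TS.F G, ?_, ?_, TS.F_tmk⟩
  · have h : (TS.toN G).comp (TS.F G) = SemidirectProduct.inl.comp SemidirectProduct.inl :=
      TS.text fun a b => by
        rw [MonoidHom.comp_apply, TS.F_tmk, TS.toN_cm]; rfl
    have h2 : Function.Injective ((TS.toN G).comp (TS.F G)) := by
      rw [h]
      exact SemidirectProduct.inl_injective.comp SemidirectProduct.inl_injective
    exact Function.Injective.of_comp (f := TS.toN G) h2
  · rw [MonoidHom.range_eq_map, ← TS.closure_tmk, MonoidHom.map_closure]
    congr 1
    ext x
    constructor
    · rintro ⟨_, ⟨a, b, rfl⟩, rfl⟩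
      exact ⟨a, b, TS.F_tmk a b⟩
    · rintro ⟨a, b, rfl⟩
      exact ⟨_, ⟨a, b, rfl⟩, TS.F_tmk a b⟩
end
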